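/- arXiv:1607.00714 — 4 statements merged into one kernel-verified Lean document; each statement's English description precedes it below -/
import Mathlib

section
/- Assume m_1 + … + m_h < n. Then there exists exactly one vector s = (s_1,…,s_h) with all s_i > 0 satisfying D_i(s) = m_i for every i = 1,…,h; consequently the quantities π_{k,i} = p_k^{ht(i)} s_i / (1 + Σ_{j=1}^h p_k^{ht(j)} s_j) are uniquely determined and satisfy Σ_{k=1}^n π_{k,i} = m_i for every i. -/
/-!
For an arbitrary array of positive weights `a k i` in place of `p k ^ ht i`, the equations
`D_i(s) = m_i` say that `s` is a fixed point of the map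
`F(s)_i = m_i / ∑ k, a k i / (1 + ∑ j, a k j * s j)`. This map is positive, monotone and strictly
subhomogeneous (`F(r s) < r F(s)` for `r > 1`), that is, a standard interference function in the
sense of Yates.

Comparing two fixed points `s`, `t` at the coordinate where `t i / s i` is largest shows that there
is at most one. By the Knaster–Tarski argument there is one as soon as the set `{s ≥ 0 | s ≤ F s}`
is bounded, and this is where `∑ i, m i < n` enters: with `Z_k = 1 + ∑ j, a k j * s j`, summing
`D_i(s) ≤ m_i` over `i` gives `∑ k, (1 - 1 / Z_k) ≤ ∑ i, m i`, while a large coordinate of `s`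
would make every `Z_k` large and the left-hand side close to `n`.
-/

open Finset Filter

/-- `D_i(s) = Σ_{k=1}^n p_k^{ht(i)} s_i / (1 + Σ_{j=1}^h p_k^{ht(j)} s_j)`.
Lists `1,…,h` are indexed by `i : Fin h` (index `i` stands for list `i+1`). -/
noncomputable def Dfun (n h : ℕ) (p : Fin n → ℝ) (ht : Fin h → ℕ) (s : Fin h → ℝ)
    (i : Fin h) : ℝ :=
  ∑ k, p k ^ ht i * s i / (1 + ∑ j, p k ^ ht j * s j)

/-- Flat height function on lists `1,…,h` (index `i : Fin h` stands for list `i+1`):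
`ht_F(i) = i` for `i ≤ h_N` and `ht_F(i) = i − h_N` for `i > h_N`. -/
def htFlat (h hN : ℕ) : Fin h → ℕ :=
  fun i => if i.val + 1 ≤ hN then i.val + 1 else i.val + 1 - hN

/-- Layered height function on lists `1,…,h`: `ht_L(i) = i`. -/
def htLayer (h : ℕ) : Fin h → ℕ := fun i => i.val + 1

section KnasterTarski

variable {α : Type*} [ConditionallyCompleteLattice α] {f : α → α} {x₀ : α}

lemma exists_isFixedPt_of_bddAbove_setOf_le_map (hf : MonotoneOn f (Set.Ici x₀))
    (hx₀ : x₀ ≤ f x₀) (hbdd : BddAbove {x | x₀ ≤ x ∧ x ≤ f x}) :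
    ∃ x, x₀ ≤ x ∧ Function.IsFixedPt f x := by
  obtain ⟨x, hlub⟩ : ∃ x, IsLUB {x | x₀ ≤ x ∧ x ≤ f x} x :=
    ⟨_, isLUB_csSup ⟨x₀, le_rfl, hx₀⟩ hbdd⟩
  have hx : x₀ ≤ x := hlub.1 ⟨le_rfl, hx₀⟩
  have hle : x ≤ f x := hlub.2 fun y hy => hy.2.trans (hf hy.1 hx (hlub.1 hy))
  have hge : f x ≤ x := hlub.1 ⟨hx.trans hle, hf hx (hx.trans hle) hle⟩
  exact ⟨x, hx, hge.antisymm hle⟩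

end KnasterTarski

/-- A standard interference function in the sense of Yates: a map on the nonnegative orthant that
is positive, monotone and scalable (strictly subhomogeneous). The map is total on `ι → ℝ`;
its values outside the nonnegative orthant are unconstrained. -/
structure IsStandardInterference {ι : Type*} (f : (ι → ℝ) → ι → ℝ) : Prop where
  pos : ∀ ⦃s⦄, 0 ≤ s → ∀ i, 0 < f s i
  monotoneOn : MonotoneOn f (Set.Ici 0)
  scalable : ∀ ⦃s⦄, 0 ≤ s → ∀ ⦃r : ℝ⦄, 1 < r → ∀ i, f (r • s) i < r * f s i

namespace IsStandardInterference

variable {ι : Type*} {f : (ι → ℝ) → ι → ℝ} {s t : ι → ℝ}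

lemma le_of_le_map_of_map_le [Finite ι] (hf : IsStandardInterference f) (hs : 0 ≤ s) (ht : 0 ≤ t)
    (htf : t ≤ f t) (hsf : f s ≤ s) : t ≤ s := by
  intro l
  have hs_pos (i : ι) : 0 < s i := (hf.pos hs i).trans_le (hsf i)
  have : Nonempty ι := ⟨l⟩
  obtain ⟨i, hi⟩ := Finite.exists_max fun i => t i / s i
  set r := t i / s i
  by_contra! hlt
  have hr_one : 1 < r := ((one_lt_div (hs_pos l)).2 hlt).trans_le (hi l)
  have htr : t ≤ r • s := fun j => (div_le_iff₀ (hs_pos j)).1 (hi j)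
  refine lt_irrefl (t i) ?_
  calc t i ≤ f t i := htf i
    _ ≤ f (r • s) i := hf.monotoneOn ht (ht.trans htr) htr i
    _ < r * f s i := hf.scalable hs hr_one i
    _ ≤ r * s i := by gcongr; exact hsf i
    _ = t i := div_mul_cancel₀ _ (hs_pos i).ne'

theorem existsUnique_isFixedPt [Finite ι] (hf : IsStandardInterference f)
    (hbdd : BddAbove {s | 0 ≤ s ∧ s ≤ f s}) :
    ∃! s : ι → ℝ, (∀ i, 0 < s i) ∧ Function.IsFixedPt f s := by
  obtain ⟨s, hs, hsf⟩ := exists_isFixedPt_of_bddAbove_setOf_le_map hf.monotoneOn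
    (fun i => (hf.pos le_rfl i).le) hbdd
  refine ⟨s, ⟨fun i => (hf.pos hs i).trans_eq (congrFun hsf i), hsf⟩, fun t ⟨ht_pos, htf⟩ => ?_⟩
  have ht : 0 ≤ t := fun i => (ht_pos i).le
  exact (hf.le_of_le_map_of_map_le hs ht htf.ge hsf.le).antisymm
    (hf.le_of_le_map_of_map_le ht hs hsf.ge htf.le)

end IsStandardInterference

section Weights

variable {κ ι : Type*} [Fintype ι] {a : κ → ι → ℝ} {m s t : ι → ℝ}

/-- The quantity `Z_k(s) = 1 + ∑ j, a k j * s j` attached to item `k`, which is the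
common denominator of the quantities `π_{k,i} = a k i * s i / Z_k(s)`. -/
def itemDenom (a : κ → ι → ℝ) (s : ι → ℝ) (k : κ) : ℝ :=
  1 + ∑ j, a k j * s j

lemma itemDenom_pos (ha : ∀ k i, 0 ≤ a k i) (hs : 0 ≤ s) (k : κ) : 0 < itemDenom a s k :=
  add_pos_of_pos_of_nonneg one_pos <| sum_nonneg fun j _ => mul_nonneg (ha k j) (hs j)

lemma itemDenom_le_itemDenom (ha : ∀ k i, 0 ≤ a k i) (hst : s ≤ t) (k : κ) :
    itemDenom a s k ≤ itemDenom a t k := by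
  unfold itemDenom
  gcongr with j
  exacts [ha k j, hst j]

lemma itemDenom_smul_lt {r : ℝ} (hr : 1 < r) (a : κ → ι → ℝ) (s : ι → ℝ) (k : κ) :
    itemDenom a (r • s) k < r * itemDenom a s k := by
  have hsum : ∑ j, a k j * (r • s) j = r * ∑ j, a k j * s j := by
    simp only [mul_sum, Pi.smul_apply, smul_eq_mul, mul_left_comm]
  rw [itemDenom, itemDenom, hsum]
  linarith

lemma one_add_mul_le_itemDenom (ha : ∀ k i, 0 ≤ a k i) (hs : 0 ≤ s) (k : κ) (i : ι) :
    1 + a k i * s i ≤ itemDenom a s k := by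
  unfold itemDenom
  gcongr
  exact single_le_sum (f := fun j => a k j * s j) (fun j _ => mul_nonneg (ha k j) (hs j))
    (mem_univ i)

lemma sum_mul_div_itemDenom_eq_one_sub {k : κ} (hZ : itemDenom a s k ≠ 0) :
    ∑ i, a k i * s i / itemDenom a s k = 1 - 1 / itemDenom a s k := by
  rw [← sum_div, one_sub_div hZ, itemDenom, add_sub_cancel_left]

variable [Fintype κ]

/-- The map `F(s)_i = m_i / ∑ k, a k i / Z_k(s)`, obtained by solving `D_i(s) = m_i` for the
factor `s_i` in the numerators: as long as the denominator does not vanish, its fixed points are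
the solutions of these equations. -/
noncomputable def occupancyMap (a : κ → ι → ℝ) (m s : ι → ℝ) (i : ι) : ℝ :=
  m i / ∑ k, a k i / itemDenom a s k

lemma sum_div_itemDenom_pos (ha : ∀ k i, 0 ≤ a k i) {i : ι} (hai : ∃ k, 0 < a k i)
    (hs : 0 ≤ s) : 0 < ∑ k, a k i / itemDenom a s k := by
  obtain ⟨k, hk⟩ := hai
  exact sum_pos' (fun k _ => div_nonneg (ha k i) (itemDenom_pos ha hs k).le)
    ⟨k, mem_univ k, div_pos hk (itemDenom_pos ha hs k)⟩

lemma sum_mul_div_itemDenom_eq_mul_sum (a : κ → ι → ℝ) (s : ι → ℝ) (i : ι) :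
    ∑ k, a k i * s i / itemDenom a s k = s i * ∑ k, a k i / itemDenom a s k := by
  simp only [mul_sum, mul_comm _ (s i), mul_div_assoc]

lemma le_occupancyMap_iff (ha : ∀ k i, 0 ≤ a k i) {i : ι} (hai : ∃ k, 0 < a k i) (hs : 0 ≤ s) :
    s i ≤ occupancyMap a m s i ↔ ∑ k, a k i * s i / itemDenom a s k ≤ m i := by
  rw [sum_mul_div_itemDenom_eq_mul_sum, occupancyMap,
    le_div_iff₀ (sum_div_itemDenom_pos ha hai hs)]

lemma isFixedPt_occupancyMap_iff (ha : ∀ k i, 0 ≤ a k i) (hai : ∀ i, ∃ k, 0 < a k i)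
    (hs : 0 ≤ s) : Function.IsFixedPt (occupancyMap a m) s ↔
      ∀ i, ∑ k, a k i * s i / itemDenom a s k = m i := by
  refine funext_iff.trans (forall_congr' fun i => ?_)
  rw [sum_mul_div_itemDenom_eq_mul_sum, occupancyMap,
    div_eq_iff (sum_div_itemDenom_pos ha (hai i) hs).ne', eq_comm]

lemma isStandardInterference_occupancyMap (ha : ∀ k i, 0 ≤ a k i) (hai : ∀ i, ∃ k, 0 < a k i)
    (hm : ∀ i, 0 < m i) : IsStandardInterference (occupancyMap a m) where
  pos s hs i := div_pos (hm i) (sum_div_itemDenom_pos ha (hai i) hs)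
  monotoneOn s hs t ht hst i := by
    refine div_le_div_of_nonneg_left (hm i).le (sum_div_itemDenom_pos ha (hai i) ht) ?_
    exact sum_le_sum fun k _ => div_le_div_of_nonneg_left (ha k i) (itemDenom_pos ha hs k)
      (itemDenom_le_itemDenom ha hst k)
  scalable s hs r hr i := by
    have hr_pos : 0 < r := one_pos.trans hr
    have hrs : 0 ≤ r • s := smul_nonneg hr_pos.le hs
    have hsum : (∑ k, a k i / itemDenom a s k) / r < ∑ k, a k i / itemDenom a (r • s) k := by
      obtain ⟨k₀, hk₀⟩ := hai i
      simp only [sum_div, div_div, mul_comm _ r]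
      exact sum_lt_sum
        (fun k _ => div_le_div_of_nonneg_left (ha k i) (itemDenom_pos ha hrs k)
          (itemDenom_smul_lt hr a s k).le)
        ⟨k₀, mem_univ k₀, div_lt_div_of_pos_left hk₀ (itemDenom_pos ha hrs k₀)
          (itemDenom_smul_lt hr a s k₀)⟩
    calc m i / ∑ k, a k i / itemDenom a (r • s) k
        < m i / ((∑ k, a k i / itemDenom a s k) / r) :=
          div_lt_div_of_pos_left (hm i)
            (div_pos (sum_div_itemDenom_pos ha (hai i) hs) hr_pos) hsum
      _ = r * occupancyMap a m s i := by rw [occupancyMap, div_div_eq_mul_div]; ring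

lemma le_of_sum_sum_mul_div_itemDenom_le (ha : ∀ k i, 0 ≤ a k i) (hs : 0 ≤ s) {c M : ℝ}
    (hc : 0 < c) {i : ι} (hca : ∀ k, c ≤ a k i) (hM : M < Fintype.card κ)
    (hsM : ∑ j, ∑ k, a k j * s j / itemDenom a s k ≤ M) :
    s i ≤ M / (c * (Fintype.card κ - M)) := by
  have hx : 0 < 1 + c * s i := add_pos_of_pos_of_nonneg one_pos (mul_nonneg hc.le (hs i))
  have hZ (k : κ) : 1 + c * s i ≤ itemDenom a s k := by
    refine le_trans ?_ (one_add_mul_le_itemDenom ha hs k i)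
    gcongr
    exacts [hs i, hca k]
  have hcard : Fintype.card κ * (1 - 1 / (1 + c * s i)) ≤ M :=
    calc
      _ = ∑ _k : κ, (1 - 1 / (1 + c * s i)) := by rw [sum_const, card_univ, nsmul_eq_mul]
      _ ≤ ∑ k, (1 - 1 / itemDenom a s k) := by gcongr with k; exact hZ k
      _ = ∑ j, ∑ k, a k j * s j / itemDenom a s k := by
        rw [sum_comm]
        exact sum_congr rfl fun k _ =>
          (sum_mul_div_itemDenom_eq_one_sub (itemDenom_pos ha hs k).ne').symm
      _ ≤ M := hsM
  rw [one_sub_div hx.ne', add_sub_cancel_left, ← mul_div_assoc, div_le_iff₀ hx] at hcard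
  rw [le_div_iff₀ (mul_pos hc (sub_pos.2 hM))]
  linarith

lemma bddAbove_setOf_le_occupancyMap [Nonempty κ] (ha : ∀ k i, 0 < a k i)
    (hm : ∑ i, m i < Fintype.card κ) : BddAbove {s | 0 ≤ s ∧ s ≤ occupancyMap a m s} := by
  have ha_nonneg (k : κ) (i : ι) : 0 ≤ a k i := (ha k i).le
  choose k₀ hk₀ using fun i => Finite.exists_min fun k => a k i
  refine ⟨fun i => (∑ i, m i) / (a (k₀ i) i * (Fintype.card κ - ∑ i, m i)), fun s hs i => ?_⟩
  refine le_of_sum_sum_mul_div_itemDenom_le ha_nonneg hs.1 (ha (k₀ i) i) (hk₀ i) hm ?_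
  exact sum_le_sum fun i _ => (le_occupancyMap_iff ha_nonneg ⟨k₀ i, ha (k₀ i) i⟩ hs.1).1 (hs.2 i)

theorem fixed_point_exists_unique_general (ha : ∀ k i, 0 < a k i) (hm : ∀ i, 0 < m i)
    (hmn : ∑ i, m i < Fintype.card κ) :
    ∃! s : ι → ℝ, (∀ i, 0 < s i) ∧
      ∀ i, ∑ k, a k i * s i / (1 + ∑ j, a k j * s j) = m i := by
  have : Nonempty κ := Fintype.card_pos_iff.1 <| Nat.cast_pos.1 <|
    (sum_nonneg fun i _ => (hm i).le).trans_lt hmn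
  have ha_nonneg (k : κ) (i : ι) : 0 ≤ a k i := (ha k i).le
  have hai (i : ι) : ∃ k, 0 < a k i := ‹Nonempty κ›.elim fun k => ⟨k, ha k i⟩
  have hF := (isStandardInterference_occupancyMap ha_nonneg hai hm).existsUnique_isFixedPt
    (bddAbove_setOf_le_occupancyMap ha hmn)
  refine (existsUnique_congr fun s => and_congr_right fun hs => ?_).1 hF
  exact isFixedPt_occupancyMap_iff ha_nonneg hai fun i => (hs i).le

end Weights

/-- there is exactly one positive vector `s` with `D_i(s) = m_i` for all `i`;
consequently the quantities `π_{k,i} = p_k^{ht(i)} s_i/(1+Σ_j p_k^{ht(j)} s_j)` are uniquely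
determined and satisfy `Σ_k π_{k,i} = m_i`. -/
theorem fixed_point_exists_unique
    (n h hN : ℕ) (hn : 2 ≤ n) (hh : 2 ≤ h) (hN1 : 1 ≤ hN) (hNh : hN < h)
    (ht : Fin h → ℕ) (hht : ht = htFlat h hN ∨ ht = htLayer h)
    (p : Fin n → ℝ) (hp : ∀ k, 0 < p k)
    (m : Fin h → ℝ) (hm : ∀ i, 0 < m i) (hmn : ∑ i, m i < (n : ℝ)) :
    ∃! s : Fin h → ℝ, (∀ i, 0 < s i) ∧
      ∀ i, (∑ k, p k ^ ht i * s i / (1 + ∑ j, p k ^ ht j * s j)) = m i := by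
  exact fixed_point_exists_unique_general (a := fun k i => p k ^ ht i)
    (fun k i => pow_pos (hp k) (ht i)) hm (by simpa using hmn)
end

section
/- Assume m_1 + … + m_h < n. Then the set { s ∈ [0,∞)^h : D_i(s) ≤ m_i for all i = 1,…,h } is bounded. -/
/-!
Let `w k i = p_k ^ ht(i)` and `S_k = ∑ j, w k j * s j`. Exchanging the two sums gives
`∑ i, D_i(s) = ∑ k, S_k / (1 + S_k) = n - ∑ k, 1 / (1 + S_k)`. So if `∑ i, D_i(s) ≤ c < n`, then
`∑ k, 1 / (1 + S_k) ≥ n - c > 0`, and by pigeonhole some `k` has `1 + S_k ≤ n / (n - c)`. As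
`w k i * s i ≤ S_k`, this bounds every `s i`; the index `k` depends on `s`, but there are only
finitely many.
-/

open Finset Filter

open scoped Matrix

theorem mul_le_dotProduct_of_nonneg {ι R : Type*} [Fintype ι] [NonUnitalNonAssocSemiring R]
    [PartialOrder R] [IsOrderedAddMonoid R] [PosMulMono R] {v w : ι → R} (hv : 0 ≤ v) (hw : 0 ≤ w)
    (i : ι) : v i * w i ≤ v ⬝ᵥ w :=
  single_le_sum (f := fun j => v j * w j) (fun j _ => mul_nonneg (hv j) (hw j)) (mem_univ i)

/-- The function `D_i(s)` for an arbitrary weight matrix `w` in place of the weights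
`w k i = p_k ^ ht(i)`; since `(w *ᵥ s) k = ∑ j, w k j * s j`, it specializes definitionally
to `Dfun`. -/
def weightedD {ι κ 𝕜 : Type*} [Fintype ι] [Fintype κ] [Field 𝕜]
    (w : Matrix κ ι 𝕜) (s : ι → 𝕜) (i : ι) : 𝕜 :=
  ∑ k, w k i * s i / (1 + (w *ᵥ s) k)

section

variable {ι κ 𝕜 : Type*} [Fintype ι] [Fintype κ] [Field 𝕜]

theorem sum_weightedD {w : Matrix κ ι 𝕜} {s : ι → 𝕜} (h : ∀ k, 1 + (w *ᵥ s) k ≠ 0) :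
    ∑ i, weightedD w s i = Fintype.card κ - ∑ k, (1 + (w *ᵥ s) k)⁻¹ :=
  calc ∑ i, weightedD w s i
    _ = ∑ k, (w *ᵥ s) k / (1 + (w *ᵥ s) k) := by
      simp only [weightedD]
      rw [sum_comm]
      exact sum_congr rfl fun k _ => (sum_div _ _ _).symm
    _ = ∑ k, (1 - (1 + (w *ᵥ s) k)⁻¹) := by
      refine sum_congr rfl fun k _ => ?_
      have hk : 1 + (w *ᵥ s) k ≠ 0 := h k
      field_simp
      ring
    _ = Fintype.card κ - ∑ k, (1 + (w *ᵥ s) k)⁻¹ := by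
      simp [sum_sub_distrib]

variable [LinearOrder 𝕜] [IsStrictOrderedRing 𝕜]

theorem exists_le_card_div_of_le_sum_inv {x : κ → 𝕜} {δ : 𝕜} (hx : ∀ k, 0 < x k) (hδ : 0 < δ)
    (h : δ ≤ ∑ k, (x k)⁻¹) : ∃ k, x k ≤ Fintype.card κ / δ := by
  have hne : (univ : Finset κ).Nonempty := nonempty_of_sum_ne_zero (hδ.trans_le h).ne'
  have hcard : (0 : 𝕜) < Fintype.card κ := Nat.cast_pos.2 hne.card_pos
  obtain ⟨k, -, hk⟩ : ∃ k ∈ univ, δ / Fintype.card κ ≤ (x k)⁻¹ := by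
    refine exists_le_of_sum_le hne ?_
    simpa [mul_div_cancel₀ _ hcard.ne'] using h
  refine ⟨k, ?_⟩
  simpa only [inv_div] using (le_inv_comm₀ (div_pos hδ hcard) (hx k)).1 hk

theorem exists_one_add_mulVec_le_of_sum_weightedD_le {w : Matrix κ ι 𝕜} {s : ι → 𝕜} {c : 𝕜}
    (hw : ∀ k i, 0 ≤ w k i) (hs : 0 ≤ s) (hc : c < Fintype.card κ)
    (hD : ∑ i, weightedD w s i ≤ c) :
    ∃ k, 1 + (w *ᵥ s) k ≤ Fintype.card κ / (Fintype.card κ - c) := by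
  have hpos (k : κ) : 0 < 1 + (w *ᵥ s) k :=
    add_pos_of_pos_of_nonneg one_pos (dotProduct_nonneg_of_nonneg (hw k) hs)
  rw [sum_weightedD fun k => (hpos k).ne'] at hD
  exact exists_le_card_div_of_le_sum_inv hpos (sub_pos.2 hc) (sub_le_comm.1 hD)

theorem le_sum_of_sum_weightedD_le {w : Matrix κ ι 𝕜} {s : ι → 𝕜} {c : 𝕜}
    (hw : ∀ k i, 0 < w k i) (hs : 0 ≤ s) (hc : c < Fintype.card κ)
    (hD : ∑ i, weightedD w s i ≤ c) (i : ι) :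
    s i ≤ ∑ k, Fintype.card κ / (Fintype.card κ - c) / w k i := by
  have hw₀ (k : κ) (j : ι) : 0 ≤ w k j := (hw k j).le
  obtain ⟨k, hk⟩ := exists_one_add_mulVec_le_of_sum_weightedD_le hw₀ hs hc hD
  have hentry : w k i * s i ≤ Fintype.card κ / (Fintype.card κ - c) :=
    calc w k i * s i
      _ ≤ (w *ᵥ s) k := mul_le_dotProduct_of_nonneg (hw₀ k) hs i
      _ ≤ 1 + (w *ᵥ s) k := le_add_of_nonneg_left zero_le_one
      _ ≤ _ := hk
  calc s i
    _ ≤ Fintype.card κ / (Fintype.card κ - c) / w k i := (le_div_iff₀' (hw k i)).2 hentry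
    _ ≤ ∑ k, Fintype.card κ / (Fintype.card κ - c) / w k i :=
      single_le_sum (f := fun k => Fintype.card κ / (Fintype.card κ - c) / w k i)
        (fun k _ => div_nonneg (div_nonneg (Nat.cast_nonneg _) (sub_pos.2 hc).le) (hw₀ k i))
        (mem_univ k)

end

theorem sublevel_set_bounded_general {ι κ : Type*} [Fintype ι] [Fintype κ]
    {w : Matrix κ ι ℝ} (hw : ∀ k i, 0 < w k i) {m : ι → ℝ} (hm : ∑ i, m i < Fintype.card κ) :
    Bornology.IsBounded {s : ι → ℝ | (∀ i, 0 ≤ s i) ∧ ∀ i, weightedD w s i ≤ m i} := by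
  refine (Metric.isBounded_Icc 0
    fun i => ∑ k, Fintype.card κ / (Fintype.card κ - ∑ j, m j) / w k i).subset ?_
  rintro s ⟨hs, hD⟩
  exact ⟨hs, le_sum_of_sum_weightedD_le hw hs hm (sum_le_sum fun i _ => hD i)⟩

/-- if `m_1 + ⋯ + m_h < n`, the set of nonnegative vectors `s` with
`D_i(s) ≤ m_i` for all `i` is bounded. -/
theorem sublevel_set_bounded
    (n h hN : ℕ) (hn : 2 ≤ n) (hh : 2 ≤ h) (hN1 : 1 ≤ hN) (hNh : hN < h)
    (ht : Fin h → ℕ) (hht : ht = htFlat h hN ∨ ht = htLayer h)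
    (p : Fin n → ℝ) (hp : ∀ k, 0 < p k)
    (m : Fin h → ℝ) (hm : ∀ i, 0 < m i) (hmn : ∑ i, m i < (n : ℝ)) :
    Bornology.IsBounded
      {s : Fin h → ℝ | (∀ i, 0 ≤ s i) ∧ ∀ i, Dfun n h p ht s i ≤ m i} := by
  exact sublevel_set_bounded_general (w := fun k i => p k ^ ht i)
    (fun k i => pow_pos (hp k) (ht i)) (by simpa only [Fintype.card_fin] using hmn)
end

section
/- Fix i ∈ {1,…,h} and s ∈ [0,∞)^h. The map y ↦ D_i(s_1,…,s_{i−1}, y, s_{i+1},…,s_h) is continuous and strictly increasing on [0,∞), takes the value 0 at y = 0, and tends to n as y → ∞. Consequently, for every real m_i with 0 < m_i < n there is a unique y > 0 (denoted G_i(s)) with D_i(s_1,…,s_{i−1}, y, s_{i+1},…,s_h) = m_i. -/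
/-!
With the other coordinates fixed, the `k`-th summand of `D_i` is `a y / (c + a y)`, where
`a = p_k ^ ht(i) > 0` and `c = 1 + ∑_{j ≠ i} p_k ^ ht(j) s_j > 0` do not depend on `y`.
Written as `1 - c / (c + a y)`, it visibly increases strictly from `0` towards `1`, so the sum of
the `n` summands increases from `0` towards `n`; the intermediate value theorem does the rest.
-/

open Finset Filter

theorem existsUnique_lt_and_eq_of_tendsto_atTop {α β : Type*}
    [ConditionallyCompleteLinearOrder α] [TopologicalSpace α] [OrderTopology α] [DenselyOrdered α]
    [LinearOrder β] [TopologicalSpace β] [OrderClosedTopology β]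
    {f : α → β} {a : α} {m l : β} (hcont : ContinuousOn f (Set.Ici a))
    (hinj : Set.InjOn f (Set.Ici a)) (hlim : Tendsto f atTop (nhds l)) (ham : f a < m)
    (hml : m < l) :
    ∃! y, a < y ∧ f y = m := by
  have : Nonempty α := ⟨a⟩
  obtain ⟨y, hy, rfl⟩ := isPreconnected_Ici.intermediate_value_Ico Set.self_mem_Ici
    (le_principal_iff.2 (Ici_mem_atTop a)) hcont hlim ⟨ham.le, hml⟩
  have hay : a < y := lt_of_le_of_ne hy fun h => ham.ne (congrArg f h)
  exact ⟨y, ⟨hay, rfl⟩, fun z hz => hinj hz.1.le hy hz.2⟩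

/-- The saturation curve `y ↦ a y / (c + a y)`, the form taken by each summand of `D_i` as a
function of the `i`-th coordinate. -/
def saturation {K : Type*} [Field K] (a c y : K) : K :=
  a * y / (c + a * y)

section Saturation

variable {K : Type*} [Field K] {a c : K}

theorem saturation_eq_one_sub_div {y : K} (h : c + a * y ≠ 0) :
    saturation a c y = 1 - c / (c + a * y) := by
  rw [saturation, one_sub_div h, add_sub_cancel_left]

variable [LinearOrder K] [IsStrictOrderedRing K]

theorem add_mul_pos_of_mem_Ici {y : K} (ha : 0 ≤ a) (hc : 0 < c) (hy : y ∈ Set.Ici 0) :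
    0 < c + a * y :=
  add_pos_of_pos_of_nonneg hc (mul_nonneg ha hy)

theorem strictMonoOn_saturation (ha : 0 < a) (hc : 0 < c) :
    StrictMonoOn (saturation a c) (Set.Ici 0) := by
  intro x hx y hy hxy
  have hx_pos := add_mul_pos_of_mem_Ici ha.le hc hx
  have hy_pos := add_mul_pos_of_mem_Ici ha.le hc hy
  rw [saturation_eq_one_sub_div hx_pos.ne', saturation_eq_one_sub_div hy_pos.ne']
  gcongr

variable [TopologicalSpace K] [OrderTopology K]

theorem continuousOn_saturation (ha : 0 ≤ a) (hc : 0 < c) :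
    ContinuousOn (saturation a c) (Set.Ici 0) :=
  ContinuousOn.div (by fun_prop) (by fun_prop) fun _ hy => (add_mul_pos_of_mem_Ici ha hc hy).ne'

theorem tendsto_saturation_atTop (ha : 0 < a) (c : K) :
    Tendsto (saturation a c) atTop (nhds 1) := by
  have hden : Tendsto (fun y => c + a * y) atTop atTop :=
    tendsto_atTop_add_const_left _ c (tendsto_id.const_mul_atTop ha)
  have hlim : Tendsto (fun y => 1 - c / (c + a * y)) atTop (nhds 1) := by
    simpa only [sub_zero] using (hden.const_div_atTop c).const_sub 1
  refine hlim.congr' ?_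
  filter_upwards [hden.eventually_ne_atTop 0] with y hy
  exact (saturation_eq_one_sub_div hy).symm

end Saturation

/-- The part `1 + Σ_{j ≠ i} q^{ht(j)} s_j` of the denominator of a summand of `D_i` that does not
involve the `i`-th coordinate, for an item of popularity `q`. -/
def restDenom {h : ℕ} (ht : Fin h → ℕ) (s : Fin h → ℝ) (i : Fin h) (q : ℝ) : ℝ :=
  1 + ∑ j ∈ univ.erase i, q ^ ht j * s j

section Dfun

variable {n h : ℕ} {p : Fin n → ℝ} {s : Fin h → ℝ} {i : Fin h}

theorem restDenom_pos {q : ℝ} (ht : Fin h → ℕ) (hq : 0 ≤ q) (hs : ∀ j ≠ i, 0 ≤ s j) :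
    0 < restDenom ht s i q :=
  add_pos_of_pos_of_nonneg one_pos <| sum_nonneg fun j hj =>
    mul_nonneg (pow_nonneg hq _) (hs j (ne_of_mem_erase hj))

theorem one_add_sum_update (ht : Fin h → ℕ) (s : Fin h → ℝ) (i : Fin h) (q y : ℝ) :
    1 + ∑ j, q ^ ht j * Function.update s i y j = restDenom ht s i q + q ^ ht i * y := by
  have hrest : ∑ j ∈ univ.erase i, q ^ ht j * Function.update s i y j =
      ∑ j ∈ univ.erase i, q ^ ht j * s j :=
    sum_congr rfl fun j hj => by rw [Function.update_of_ne (ne_of_mem_erase hj)]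
  rw [← sum_erase_add univ _ (mem_univ i), hrest, Function.update_self, ← add_assoc, restDenom]

theorem Dfun_update_self (p : Fin n → ℝ) (ht : Fin h → ℕ) (s : Fin h → ℝ) (i : Fin h) (y : ℝ) :
    Dfun n h p ht (Function.update s i y) i =
      ∑ k, saturation (p k ^ ht i) (restDenom ht s i (p k)) y := by
  simp only [Dfun, one_add_sum_update, Function.update_self, saturation]

theorem Dfun_update_zero (p : Fin n → ℝ) (ht : Fin h → ℕ) (s : Fin h → ℝ) (i : Fin h) :
    Dfun n h p ht (Function.update s i 0) i = 0 := by
  simp [Dfun]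

theorem continuousOn_Dfun_update (ht : Fin h → ℕ) (hp : ∀ k, 0 ≤ p k) (hs : ∀ j ≠ i, 0 ≤ s j) :
    ContinuousOn (fun y => Dfun n h p ht (Function.update s i y) i) (Set.Ici 0) := by
  simp only [Dfun_update_self]
  exact continuousOn_finsetSum _ fun k _ =>
    continuousOn_saturation (pow_nonneg (hp k) _) (restDenom_pos ht (hp k) hs)

theorem strictMonoOn_Dfun_update (hn : n ≠ 0) (ht : Fin h → ℕ) (hp : ∀ k, 0 < p k)
    (hs : ∀ j ≠ i, 0 ≤ s j) :
    StrictMonoOn (fun y => Dfun n h p ht (Function.update s i y) i) (Set.Ici 0) := by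
  have : NeZero n := ⟨hn⟩
  simp only [Dfun_update_self]
  exact fun x hx y hy hxy => sum_lt_sum_of_nonempty univ_nonempty fun k _ =>
    strictMonoOn_saturation (pow_pos (hp k) _) (restDenom_pos ht (hp k).le hs) hx hy hxy

theorem tendsto_Dfun_update_atTop (ht : Fin h → ℕ) (hp : ∀ k, 0 < p k) (s : Fin h → ℝ)
    (i : Fin h) :
    Tendsto (fun y => Dfun n h p ht (Function.update s i y) i) atTop (nhds (n : ℝ)) := by
  simp only [Dfun_update_self]
  have hsum := tendsto_finsetSum (univ : Finset (Fin n)) fun k _ =>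
    tendsto_saturation_atTop (pow_pos (hp k) (ht i)) (restDenom ht s i (p k))
  simpa only [sum_const, card_univ, Fintype.card_fin, nsmul_one] using hsum

end Dfun

theorem D_single_coordinate_behavior_general
    (n h : ℕ) (hn : n ≠ 0) (ht : Fin h → ℕ) (p : Fin n → ℝ) (hp : ∀ k, 0 < p k)
    (i : Fin h) (s : Fin h → ℝ) (hs : ∀ j ≠ i, 0 ≤ s j) :
    ContinuousOn (fun y : ℝ => Dfun n h p ht (Function.update s i y) i) (Set.Ici 0) ∧
    StrictMonoOn (fun y : ℝ => Dfun n h p ht (Function.update s i y) i) (Set.Ici 0) ∧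
    Dfun n h p ht (Function.update s i 0) i = 0 ∧
    Tendsto (fun y : ℝ => Dfun n h p ht (Function.update s i y) i) atTop (nhds (n : ℝ)) ∧
    ∀ mi : ℝ, 0 < mi → mi < n →
      ∃! y : ℝ, 0 < y ∧ Dfun n h p ht (Function.update s i y) i = mi := by
  have hcont := continuousOn_Dfun_update ht (fun k => (hp k).le) hs
  have hmono := strictMonoOn_Dfun_update hn ht hp hs
  have hzero := Dfun_update_zero p ht s i
  have hlim := tendsto_Dfun_update_atTop ht hp s i
  exact ⟨hcont, hmono, hzero, hlim, fun mi hmi hmin =>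
    existsUnique_lt_and_eq_of_tendsto_atTop hcont hmono.injOn hlim (hzero.trans_lt hmi) hmin⟩

/-- the map `y ↦ D_i(s_1,…,s_{i−1}, y, s_{i+1},…,s_h)` is continuous and
strictly increasing on `[0,∞)`, is `0` at `y = 0`, tends to `n` at `∞`; hence for every
`0 < m_i < n` there is a unique `y > 0` (denoted `G_i(s)`) where it takes the value `m_i`. -/
theorem D_single_coordinate_behavior
    (n h hN : ℕ) (hn : 2 ≤ n) (hh : 2 ≤ h) (hN1 : 1 ≤ hN) (hNh : hN < h)
    (ht : Fin h → ℕ) (hht : ht = htFlat h hN ∨ ht = htLayer h)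
    (p : Fin n → ℝ) (hp : ∀ k, 0 < p k)
    (i : Fin h) (s : Fin h → ℝ) (hs : ∀ j, 0 ≤ s j) :
    ContinuousOn (fun y : ℝ => Dfun n h p ht (Function.update s i y) i) (Set.Ici 0) ∧
    StrictMonoOn (fun y : ℝ => Dfun n h p ht (Function.update s i y) i) (Set.Ici 0) ∧
    Dfun n h p ht (Function.update s i 0) i = 0 ∧
    Tendsto (fun y : ℝ => Dfun n h p ht (Function.update s i y) i) atTop (nhds (n : ℝ)) ∧
    ∀ mi : ℝ, 0 < mi → mi < n →
      ∃! y : ℝ, 0 < y ∧ Dfun n h p ht (Function.update s i y) i = mi :=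
  D_single_coordinate_behavior_general n h (by omega) ht p hp i s fun j _ => hs j
end

section
/- Assume 0 < m_i < n for all i. If s, s′ ∈ [0,∞)^h satisfy s_j ≤ s′_j for every j, then G_i(s) ≤ G_i(s′) for every i ∈ {1,…,h}; that is, the implicit map G = (G_1,…,G_h) is monotone for the componentwise order. -/
/-!
With every other coordinate fixed, each summand of `D_i` has the form `x / (c + x)`, where `x` is
proportional to the `i`-th coordinate, so `D_i` is strictly increasing in that coordinate. The other
coordinates enter only through `c`, so `D_i` is antitone in them. Hence if `s ≤ s'`, then at `s` the
entry `G_i(s')` already makes `D_i` at least `m_i`, that is, at least its value at `G_i(s)`.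
-/

open Finset Filter

lemma strictMonoOn_div_const_add {𝕜 : Type*} [Field 𝕜] [LinearOrder 𝕜] [IsStrictOrderedRing 𝕜]
    {c : 𝕜} (hc : 0 < c) : StrictMonoOn (fun x => x / (c + x)) (Set.Ici 0) := by
  intro x hx y hy hxy
  have hcx : 0 < c + x := add_pos_of_pos_of_nonneg hc hx
  have hcy : 0 < c + y := add_pos_of_pos_of_nonneg hc hy
  rw [div_lt_div_iff₀ hcx hcy]
  linarith [mul_lt_mul_of_pos_right hxy hc]

section Occupancy

variable {κ ι 𝕜 : Type*} [Fintype κ] [Fintype ι] [Field 𝕜]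

/-- The expected number of items in list `i` when each item `k` sits in list `j` with weight
`a k j * s j` and outside all lists with weight `1`. This is `D_i` with the powers `p_k ^ ht(j)`
replaced by arbitrary weights. -/
def occupancy (a : κ → ι → 𝕜) (s : ι → 𝕜) (i : ι) : 𝕜 :=
  ∑ k, a k i * s i / (1 + ∑ j, a k j * s j)

lemma occupancy_update_self [DecidableEq ι] (a : κ → ι → 𝕜) (s : ι → 𝕜) (i : ι) (y : 𝕜) :
    occupancy a (Function.update s i y) i =
      ∑ k, a k i * y / (1 + ∑ j ∈ univ.erase i, a k j * s j + a k i * y) := by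
  refine sum_congr rfl fun k _ => ?_
  have hsum : ∑ j ∈ univ.erase i, a k j * Function.update s i y j =
      ∑ j ∈ univ.erase i, a k j * s j :=
    sum_congr rfl fun j hj => by rw [Function.update_of_ne (ne_of_mem_erase hj)]
  rw [← sum_erase_add univ _ (mem_univ i), hsum, Function.update_self, add_assoc]

variable [LinearOrder 𝕜] [IsStrictOrderedRing 𝕜] {a : κ → ι → 𝕜} {s s' : ι → 𝕜} {i : ι}

lemma strictMonoOn_occupancy_update [DecidableEq ι] (ha : ∀ k j, 0 ≤ a k j)
    (hpos : ∃ k, 0 < a k i) (hs : 0 ≤ s) :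
    StrictMonoOn (fun y => occupancy a (Function.update s i y) i) (Set.Ici 0) := by
  intro y hy z hz hyz
  have hmono (k : κ) : StrictMonoOn
      (fun x => x / (1 + ∑ j ∈ univ.erase i, a k j * s j + x)) (Set.Ici 0) :=
    strictMonoOn_div_const_add <|
      add_pos_of_pos_of_nonneg one_pos <| sum_nonneg fun j _ => mul_nonneg (ha k j) (hs j)
  have hy_mem (k : κ) : a k i * y ∈ Set.Ici 0 := mul_nonneg (ha k i) hy
  have hz_mem (k : κ) : a k i * z ∈ Set.Ici 0 := mul_nonneg (ha k i) hz
  obtain ⟨k₀, hk₀⟩ := hpos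
  simp only [occupancy_update_self]
  refine sum_lt_sum (fun k _ => ?_) ⟨k₀, mem_univ k₀, ?_⟩
  · exact (hmono k).monotoneOn (hy_mem k) (hz_mem k) (mul_le_mul_of_nonneg_left hyz.le (ha k i))
  · exact hmono k₀ (hy_mem k₀) (hz_mem k₀) (mul_lt_mul_of_pos_left hyz hk₀)

lemma occupancy_le_occupancy_of_le (ha : ∀ k j, 0 ≤ a k j) (hs : 0 ≤ s) (hle : s ≤ s')
    (hi : s i = s' i) : occupancy a s' i ≤ occupancy a s i := by
  unfold occupancy
  rw [← hi]
  refine sum_le_sum fun k _ => ?_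
  have hden : 0 < 1 + ∑ j, a k j * s j :=
    add_pos_of_pos_of_nonneg one_pos <| sum_nonneg fun j _ => mul_nonneg (ha k j) (hs j)
  have hsum : ∑ j, a k j * s j ≤ ∑ j, a k j * s' j :=
    sum_le_sum fun j _ => mul_le_mul_of_nonneg_left (hle j) (ha k j)
  exact div_le_div_of_nonneg_left (mul_nonneg (ha k i) (hs i)) hden (by gcongr)

theorem G_monotone_general [DecidableEq ι] (ha : ∀ k j, 0 ≤ a k j) (hpos : ∀ i, ∃ k, 0 < a k i)
    {m : ι → 𝕜} {G : (ι → 𝕜) → ι → 𝕜}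
    (hG : ∀ s, 0 ≤ s → ∀ i, 0 ≤ G s i ∧ occupancy a (Function.update s i (G s i)) i = m i) :
    MonotoneOn G (Set.Ici 0) := by
  intro s hs s' hs' hle i
  obtain ⟨hy, hD⟩ := hG s hs i
  obtain ⟨hy', hD'⟩ := hG s' hs' i
  refine ((strictMonoOn_occupancy_update ha (hpos i) hs).le_iff_le hy hy').mp ?_
  calc occupancy a (Function.update s i (G s i)) i
      = occupancy a (Function.update s' i (G s' i)) i := hD.trans hD'.symm
    _ ≤ occupancy a (Function.update s i (G s' i)) i :=
      occupancy_le_occupancy_of_le ha (le_update_iff.mpr ⟨hy', fun j _ => hs j⟩)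
        (update_le_update_iff.mpr ⟨le_rfl, fun j _ => hle j⟩) (by simp)

end Occupancy

/-- the implicit map `G = (G_1,…,G_h)`, where `G_i(s)` is the unique `y > 0`
with `D_i(s_1,…,s_{i−1}, y, s_{i+1},…,s_h) = m_i`, is monotone for the componentwise
order on `[0,∞)^h`. -/
theorem G_monotone
    (n h hN : ℕ) (hn : 2 ≤ n) (hh : 2 ≤ h) (hN1 : 1 ≤ hN) (hNh : hN < h)
    (ht : Fin h → ℕ) (hht : ht = htFlat h hN ∨ ht = htLayer h)
    (p : Fin n → ℝ) (hp : ∀ k, 0 < p k)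
    (m : Fin h → ℝ) (hm : ∀ i, 0 < m i ∧ m i < n)
    (G : (Fin h → ℝ) → Fin h → ℝ)
    (hG : ∀ s : Fin h → ℝ, (∀ j, 0 ≤ s j) → ∀ i,
      0 < G s i ∧ Dfun n h p ht (Function.update s i (G s i)) i = m i)
    (s s' : Fin h → ℝ) (hs : ∀ j, 0 ≤ s j) (hs' : ∀ j, 0 ≤ s' j)
    (hle : ∀ j, s j ≤ s' j) :
    ∀ i, G s i ≤ G s' i := by
  exact G_monotone_general (a := fun k j => p k ^ ht j) (fun k j => (pow_pos (hp k) (ht j)).le)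
    (fun i => ⟨⟨0, by omega⟩, pow_pos (hp _) (ht i)⟩)
    (fun s hs i => (hG s hs i).imp_left le_of_lt) hs hs' hle
end
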